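/- arXiv:math/0401300 — 2 statements merged into one kernel-verified Lean document; each statement's English description precedes it below -/
import Mathlib

section
/- For all nonnegative integers m and n with (m,n) ≠ (0,0), the number 2·m!·n!·(m+n)! divides (2m)!·(2n)!; consequently the super Catalan number T(m,n) = (1/2)·(2m)!·(2n)!/(m!·n!·(m+n)!) is a positive integer for all (m,n) ≠ (0,0). -/
/-- The super Catalan number `T(m,n) = (1/2) * (2m)! * (2n)! / (m! * n! * (m+n)!)`,
as a rational number. -/
def superCatalan (m n : ℕ) : ℚ :=
  (Nat.factorial (2 * m) * Nat.factorial (2 * n) : ℚ) /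
    (2 * (Nat.factorial m * Nat.factorial n * Nat.factorial (m + n)))

/-!
The super Catalan numbers satisfy `T(m+1,n) + T(m,n+1) = 4 T(m,n)`. Solving for `T(m,n+1)` reduces
integrality for `m > 0` to the boundary values `T(m,0)`, which are halves of central binomial
coefficients and hence integers. This recursion never meets `T(0,0) = 1/2`, and the remaining
numbers `T(0,n)` are boundary values by symmetry.
-/

open Nat

theorem superCatalan_pos (m n : ℕ) : 0 < superCatalan m n := by
  unfold superCatalan
  positivity

theorem superCatalan_comm (m n : ℕ) : superCatalan m n = superCatalan n m := by
  simp only [superCatalan, Nat.add_comm, mul_comm]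

theorem superCatalan_zero_right (m : ℕ) : superCatalan m 0 = (centralBinom m : ℚ) / 2 := by
  rw [superCatalan, centralBinom, cast_choose ℚ (by lia : m ≤ 2 * m),
    show 2 * m - m = m by lia, mul_zero, factorial_zero, cast_one, add_zero, mul_one, mul_one,
    mul_comm (2 : ℚ), div_div]

theorem superCatalan_succ_left (m n : ℕ) :
    (m + n + 1) * superCatalan (m + 1) n = 2 * (2 * m + 1) * superCatalan m n := by
  simp only [superCatalan, show 2 * (m + 1) = 2 * m + 1 + 1 by ring,
    show m + 1 + n = m + n + 1 by ring, factorial_succ]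
  push_cast
  field_simp
  ring

theorem superCatalan_succ_right (m n : ℕ) :
    (m + n + 1) * superCatalan m (n + 1) = 2 * (2 * n + 1) * superCatalan m n := by
  rw [superCatalan_comm m, superCatalan_comm m, add_comm (m : ℚ), superCatalan_succ_left]

theorem superCatalan_succ_left_add_succ_right (m n : ℕ) :
    superCatalan (m + 1) n + superCatalan m (n + 1) = 4 * superCatalan m n := by
  have hmn : (m + n + 1 : ℚ) ≠ 0 := by positivity
  apply mul_left_cancel₀ hmn
  linear_combination superCatalan_succ_left m n + superCatalan_succ_right m n

theorem superCatalan_succ_zero_mem_range_intCast (m : ℕ) :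
    superCatalan (m + 1) 0 ∈ (Int.castRingHom ℚ).range := by
  obtain ⟨k, hk⟩ := two_dvd_centralBinom_succ m
  exact ⟨k, by simp [superCatalan_zero_right, hk]⟩

theorem superCatalan_succ_mem_range_intCast (m n : ℕ) :
    superCatalan (m + 1) n ∈ (Int.castRingHom ℚ).range := by
  induction n generalizing m with
  | zero => exact superCatalan_succ_zero_mem_range_intCast m
  | succ n ih =>
    rw [eq_sub_of_add_eq' (superCatalan_succ_left_add_succ_right (m + 1) n)]
    exact sub_mem (mul_mem (ofNat_mem _ 4) (ih m)) (ih (m + 1))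

theorem superCatalan_mem_range_intCast {m n : ℕ} (h : ¬(m = 0 ∧ n = 0)) :
    superCatalan m n ∈ (Int.castRingHom ℚ).range := by
  rcases m with _ | m
  · obtain ⟨n, rfl⟩ := exists_eq_succ_of_ne_zero fun hn => h ⟨rfl, hn⟩
    rw [superCatalan_comm]
    exact superCatalan_succ_mem_range_intCast n 0
  · exact superCatalan_succ_mem_range_intCast m n

theorem superCatalan_eq_natCast_iff {m n k : ℕ} :
    superCatalan m n = k ↔ (2 * m)! * (2 * n)! = 2 * (m ! * n ! * (m + n)!) * k := by
  rw [superCatalan, div_eq_iff (by positivity), mul_comm (k : ℚ)]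
  norm_cast

theorem superCatalan_pos_integer (m n : ℕ) (h : ¬(m = 0 ∧ n = 0)) :
    (2 * (Nat.factorial m * Nat.factorial n * Nat.factorial (m + n))) ∣
        (Nat.factorial (2 * m) * Nat.factorial (2 * n)) ∧
      ∃ k : ℕ, 0 < k ∧ superCatalan m n = k := by
  obtain ⟨z, hz : (z : ℚ) = superCatalan m n⟩ := superCatalan_mem_range_intCast h
  have z_pos : 0 < z := by exact_mod_cast hz ▸ superCatalan_pos m n
  lift z to ℕ using z_pos.le with k
  have hk : superCatalan m n = k := by exact_mod_cast hz.symm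
  exact ⟨⟨k, superCatalan_eq_natCast_iff.mp hk⟩, k, by exact_mod_cast z_pos, hk⟩
end

section
/- For every integer n ≥ 1, the number of ordered pairs (P,Q) of Dyck paths with semilength(P) + semilength(Q) = n such that h(P) ≤ h(Q) + 1 equals 2·C_n. -/
/-- A ballot path: a sequence of steps, each `+1` or `-1`, all of whose
partial sums are nonnegative. -/
def IsBallot (P : List ℤ) : Prop :=
  (∀ s ∈ P, s = 1 ∨ s = -1) ∧ ∀ k, 0 ≤ (P.take k).sum

/-- A Dyck path of semilength `n`: a ballot path with `2n` steps ending at level `0`. -/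
def IsDyck (n : ℕ) (P : List ℤ) : Prop :=
  IsBallot P ∧ P.length = 2 * n ∧ P.sum = 0

/-- The height of a path: the maximum of its partial sums (`0` for the empty path). -/
def pathHeight (P : List ℤ) : ℤ :=
  (((List.range (P.length + 1)).map fun k => (P.take k).sum).foldr max 0)

/-!
The decomposition of a Dyck path by its first return to level `0` gives `F₀ = 0` and
`Fₖ₊₁ = 1 + X Fₖ Fₖ₊₁`, where `Fₖ` is the generating function of the Dyck paths of height less
than `k`. Computing `X Fₖ Fₖ₊₁ Fₖ₊₂` in two ways gives `Fₖ₊₂ (Fₖ₊₁ - 1) = Fₖ (Fₖ₊₂ - 1)`, that is,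
`Fₖ₊₂ (Fₖ₊₁ - Fₖ) = Fₖ₊₂ - Fₖ`. The left-hand side enumerates the pairs `(P, Q)` with `h(Q) = k` and
`h(P) ≤ k + 1`, and the right-hand side telescopes: summing over all `k` gives
`2F - F₁ - F₀ = 2F - 1`, where `F` is the generating function of all Dyck paths.
-/

open BinaryTree Finset PowerSeries

theorem foldr_max_le_iff {α : Type*} [LinearOrder α] {L : List α} {a m : α} :
    L.foldr max a ≤ m ↔ a ≤ m ∧ ∀ x ∈ L, x ≤ m := by
  induction L with
  | nil => simp
  | cons x L ih => simp [ih, and_left_comm]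

theorem pathHeight_le_iff {P : List ℤ} {m : ℤ} :
    pathHeight P ≤ m ↔ ∀ k, (P.take k).sum ≤ m := by
  simp only [pathHeight, foldr_max_le_iff, List.forall_mem_map, List.mem_range, Nat.lt_succ_iff]
  refine ⟨fun h k => ?_, fun h => ⟨by simpa using h 0, fun k _ => h k⟩⟩
  rcases le_total k P.length with hk | hk
  · exact h.2 k hk
  · simpa [List.take_of_length_le hk] using h.2 P.length le_rfl

theorem pathHeight_nonneg (P : List ℤ) : 0 ≤ pathHeight P := by
  simpa using pathHeight_le_iff.mp le_rfl 0

@[simp]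
theorem pathHeight_nil : pathHeight [] = 0 := rfl

theorem pathHeight_cons (s : ℤ) (P : List ℤ) :
    pathHeight (s :: P) = max 0 (s + pathHeight P) := by
  refine eq_of_forall_ge_iff fun m => ?_
  rw [max_le_iff, ← le_sub_iff_add_le', pathHeight_le_iff, pathHeight_le_iff,
    ← Nat.and_forall_add_one]
  simp [le_sub_iff_add_le']

theorem pathHeight_append (P Q : List ℤ) :
    pathHeight (P ++ Q) = max (pathHeight P) (P.sum + pathHeight Q) := by
  induction P with
  | nil => simp [pathHeight_nonneg]
  | cons s P ih =>
    simp only [List.cons_append, pathHeight_cons, ih, List.sum_cons]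
    omega

/-- The step of a lattice path encoded by a letter of a Dyck word. -/
def stepValue : DyckStep → ℤ
  | .U => 1
  | .D => -1

theorem stepValue_injective : Function.Injective stepValue := by
  rintro (_ | _) (_ | _) h <;> simp_all [stepValue]

theorem range_stepValue : Set.range stepValue = {1, -1} := by
  ext s
  constructor
  · rintro ⟨_ | _, rfl⟩ <;> simp [stepValue]
  · rintro (rfl | rfl)
    exacts [⟨.U, rfl⟩, ⟨.D, rfl⟩]

theorem sum_map_stepValue (L : List DyckStep) :
    (L.map stepValue).sum = (L.count .U : ℤ) - L.count .D := by
  induction L with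
  | nil => simp
  | cons s L ih => cases s <;> grind [stepValue]

/-- The Dyck path encoded by a Dyck word. -/
def wordPath (w : DyckWord) : List ℤ := w.toList.map stepValue

theorem wordPath_injective : Function.Injective wordPath := fun _ _ h =>
  DyckWord.ext (List.map_injective_iff.mpr stepValue_injective h)

theorem wordPath_add (v w : DyckWord) : wordPath (v + w) = wordPath v ++ wordPath w :=
  List.map_append

theorem wordPath_nest (w : DyckWord) : wordPath w.nest = 1 :: wordPath w ++ [-1] := by
  simp [wordPath, DyckWord.nest, stepValue]

theorem length_wordPath (w : DyckWord) : (wordPath w).length = 2 * w.semilength := by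
  rw [wordPath, List.length_map, w.two_mul_semilength_eq_length]

theorem sum_wordPath (w : DyckWord) : (wordPath w).sum = 0 := by
  rw [wordPath, sum_map_stepValue, w.count_U_eq_count_D, sub_self]

theorem isBallot_map_stepValue_iff {L : List DyckStep} :
    IsBallot (L.map stepValue) ↔ ∀ k, (L.take k).count .D ≤ (L.take k).count .U := by
  have steps : ∀ s ∈ L.map stepValue, s = 1 ∨ s = -1 := List.forall_mem_map.mpr fun x _ =>
    range_stepValue.subset (Set.mem_range_self x)
  rw [IsBallot, and_iff_right steps]
  simp [← List.map_take, sum_map_stepValue]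

theorem isDyck_wordPath (w : DyckWord) : IsDyck w.semilength (wordPath w) :=
  ⟨isBallot_map_stepValue_iff.mpr w.count_D_le_count_U, length_wordPath w, sum_wordPath w⟩

theorem isDyck_iff_exists_wordPath {n : ℕ} {P : List ℤ} :
    IsDyck n P ↔ ∃ w : DyckWord, w.semilength = n ∧ wordPath w = P := by
  constructor
  · rintro ⟨ballot, length_eq, sum_eq⟩
    obtain ⟨L, rfl⟩ : P ∈ Set.range (List.map stepValue) := by
      rw [Set.range_list_map, range_stepValue]
      exact ballot.1
    have balanced : L.count .U = L.count .D := by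
      rw [sum_map_stepValue] at sum_eq
      omega
    let w : DyckWord := ⟨L, balanced, isBallot_map_stepValue_iff.mp ballot⟩
    have := length_wordPath w
    exact ⟨w, Nat.eq_of_mul_eq_mul_left two_pos (this.symm.trans length_eq), rfl⟩
  · rintro ⟨w, rfl, rfl⟩
    exact isDyck_wordPath w

/-- The Dyck path of a binary tree: the left subtree of the root encodes the part enclosed between
the first step and the step of first return to level `0`, and the right subtree the rest. -/
def treePath (t : BinaryTree Unit) : List ℤ := wordPath (DyckWord.equivTree.symm t)

theorem treePath_injective : Function.Injective treePath :=
  wordPath_injective.comp DyckWord.equivTree.symm.injective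

@[simp]
theorem treePath_nil : treePath nil = [] := rfl

theorem treePath_node (l r : BinaryTree Unit) :
    treePath (l △ r) = 1 :: treePath l ++ -1 :: treePath r := by
  simp [treePath, DyckWord.ofTree, wordPath_add, wordPath_nest]

theorem isDyck_iff_exists_treePath {n : ℕ} {P : List ℤ} :
    IsDyck n P ↔ ∃ t : BinaryTree Unit, t.numNodes = n ∧ treePath t = P := by
  rw [isDyck_iff_exists_wordPath, DyckWord.equivTree.exists_congr_left]
  simp [treePath, ← DyckWord.numNodes_toTree, DyckWord.toTree_ofTree]

/-- One more than the maximal number of left edges on a path from the root to a node (`0` for the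
empty tree). It corresponds to the height of Dyck paths under `treePath`. -/
def leftHeight {α : Type*} : BinaryTree α → ℕ
  | nil => 0
  | node _ l r => max (leftHeight l + 1) (leftHeight r)

theorem pathHeight_treePath (t : BinaryTree Unit) : pathHeight (treePath t) = leftHeight t := by
  induction t with
  | nil => simp [leftHeight]
  | node _ l r ihl ihr =>
    have sum_left : (treePath l).sum = 0 := sum_wordPath _
    rw [treePath_node, pathHeight_append, pathHeight_cons, pathHeight_cons, ihl, ihr]
    simp only [leftHeight, List.sum_cons, sum_left]
    omega

theorem leftHeight_le_numNodes {α : Type*} (t : BinaryTree α) : leftHeight t ≤ t.numNodes := by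
  induction t with
  | nil => simp [leftHeight]
  | node _ l r ihl ihr =>
    simp only [leftHeight, numNodes]
    omega

/-- The pairs of binary trees with `n` nodes in total. -/
def treePairs (n : ℕ) : Finset (BinaryTree Unit × BinaryTree Unit) :=
  (antidiagonal n).biUnion fun ij => treesOfNumNodesEq ij.1 ×ˢ treesOfNumNodesEq ij.2

@[simp]
theorem mem_treePairs {n : ℕ} {st : BinaryTree Unit × BinaryTree Unit} :
    st ∈ treePairs n ↔ st.1.numNodes + st.2.numNodes = n := by
  simp [treePairs, mem_treesOfNumNodesEq]

theorem card_filter_treesOfNumNodesEq_succ (n : ℕ) (p : BinaryTree Unit → Prop)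
    [DecidablePred p] :
    #{t ∈ treesOfNumNodesEq (n + 1) | p t} = #{st ∈ treePairs n | p (st.1 △ st.2)} := by
  refine (card_nbij (fun st => st.1 △ st.2) ?_ ?_ ?_).symm
  · rintro ⟨l, r⟩
    simp [mem_treesOfNumNodesEq]
  · rintro ⟨l₁, r₁⟩ - ⟨l₂, r₂⟩ -
    simp
  · rintro (_ | ⟨_, l, r⟩) <;> simp [mem_treesOfNumNodesEq]

/-- The generating function, by number of nodes, of the binary trees satisfying `p`, with
integer coefficients so that generating functions can be subtracted. -/
noncomputable def treeGenFun (p : BinaryTree Unit → Prop) [DecidablePred p] : ℤ⟦X⟧ :=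
  mk fun n => (#{t ∈ treesOfNumNodesEq n | p t} : ℤ)

section TreeGenFun

variable (p q r : BinaryTree Unit → Prop) [DecidablePred p] [DecidablePred q] [DecidablePred r]

@[simp]
theorem coeff_treeGenFun (n : ℕ) :
    coeff n (treeGenFun p) = #{t ∈ treesOfNumNodesEq n | p t} :=
  coeff_mk _ _

theorem coeff_treeGenFun_mul (n : ℕ) :
    coeff n (treeGenFun p * treeGenFun q) = #{st ∈ treePairs n | p st.1 ∧ q st.2} := by
  have mapsTo : Set.MapsTo (Prod.map numNodes numNodes)
      (SetLike.coe {st ∈ treePairs n | p st.1 ∧ q st.2}) (antidiagonal n) := fun st => by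
    simp +contextual
  rw [card_eq_sum_card_fiberwise mapsTo, coeff_mul, Nat.cast_sum]
  refine sum_congr rfl fun ij hij => ?_
  rw [coeff_treeGenFun, coeff_treeGenFun, ← Nat.cast_mul, ← card_product, ← filter_product]
  congr 2
  ext st
  simp only [mem_filter, mem_product, mem_treesOfNumNodesEq, mem_treePairs, Prod.ext_iff,
    Prod.map_fst, Prod.map_snd]
  have := mem_antidiagonal.mp hij
  grind

variable {p q r}

theorem treeGenFun_eq_one_add_X_mul (hnil : p nil) (hnode : ∀ s t, p (s △ t) ↔ q s ∧ r t) :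
    treeGenFun p = 1 + X * (treeGenFun q * treeGenFun r) := by
  ext n
  cases n with
  | zero => simp [filter_singleton, hnil]
  | succ n =>
    simp [coeff_succ_X_mul, coeff_treeGenFun_mul, card_filter_treesOfNumNodesEq_succ, hnode,
      coeff_one]

theorem treeGenFun_eq_add_of_disjoint (hp : ∀ t, p t ↔ q t ∨ r t) (hqr : ∀ t, q t → ¬r t) :
    treeGenFun p = treeGenFun q + treeGenFun r := by
  ext n
  simp [hp, filter_or, card_union_of_disjoint (disjoint_filter.mpr fun t _ => hqr t)]

end TreeGenFun

/-- The generating function of the binary trees of left height less than `k`, or equivalently of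
the Dyck paths of height less than `k`. -/
noncomputable def heightGenFun (k : ℕ) : ℤ⟦X⟧ := treeGenFun (leftHeight · < k)

theorem heightGenFun_zero : heightGenFun 0 = 0 := by
  ext n
  simp [heightGenFun]

theorem heightGenFun_succ (k : ℕ) :
    heightGenFun (k + 1) = 1 + X * (heightGenFun k * heightGenFun (k + 1)) :=
  treeGenFun_eq_one_add_X_mul (by simp [leftHeight]) (by simp [leftHeight])

theorem heightGenFun_one : heightGenFun 1 = 1 := by
  simpa [heightGenFun_zero] using heightGenFun_succ 0

theorem coeff_heightGenFun_of_lt {k n : ℕ} (h : n < k) :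
    coeff n (heightGenFun k) = catalan n := by
  rw [heightGenFun, coeff_treeGenFun, ← treesOfNumNodesEq_card_eq_catalan, filter_true_of_mem]
  intro t ht
  exact (leftHeight_le_numNodes t).trans_lt (mem_treesOfNumNodesEq.mp ht ▸ h)

theorem treeGenFun_leftHeight_eq_sub (k : ℕ) :
    treeGenFun (leftHeight · = k) = heightGenFun (k + 1) - heightGenFun k :=
  eq_sub_of_add_eq' (treeGenFun_eq_add_of_disjoint (by grind) (by grind)).symm

theorem heightGenFun_mul_sub (k : ℕ) :
    heightGenFun (k + 2) * (heightGenFun (k + 1) - heightGenFun k) =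
      heightGenFun (k + 2) - heightGenFun k := by
  linear_combination heightGenFun (k + 2) * heightGenFun_succ k -
    heightGenFun k * heightGenFun_succ (k + 1)

theorem sum_heightGenFun_mul_sub (N : ℕ) :
    ∑ k ∈ range N, heightGenFun (k + 2) * (heightGenFun (k + 1) - heightGenFun k) =
      heightGenFun (N + 1) + heightGenFun N - 1 := by
  induction N with
  | zero => simp [heightGenFun_zero, heightGenFun_one]
  | succ N ih =>
    rw [sum_range_succ, ih, heightGenFun_mul_sub]
    ring

theorem card_treePairs_leftHeight_le_eq_sum (n : ℕ) :
    (#{st ∈ treePairs n | leftHeight st.1 ≤ leftHeight st.2 + 1} : ℤ) =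
      ∑ k ∈ range (n + 1),
        coeff n (heightGenFun (k + 2) * (heightGenFun (k + 1) - heightGenFun k)) := by
  have mapsTo : Set.MapsTo (fun st => leftHeight st.2)
      (SetLike.coe {st ∈ treePairs n | leftHeight st.1 ≤ leftHeight st.2 + 1})
      (range (n + 1)) := fun st hst => by
    have := mem_treePairs.mp (mem_filter.mp hst).1
    have := leftHeight_le_numNodes st.2
    simp only [coe_range, Set.mem_Iio]
    omega
  rw [card_eq_sum_card_fiberwise mapsTo, Nat.cast_sum]
  refine sum_congr rfl fun k _ => ?_
  rw [← treeGenFun_leftHeight_eq_sub, heightGenFun, coeff_treeGenFun_mul, filter_filter]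
  congr 2
  ext st
  grind

theorem card_treePairs_leftHeight_le {n : ℕ} (hn : 1 ≤ n) :
    #{st ∈ treePairs n | leftHeight st.1 ≤ leftHeight st.2 + 1} = 2 * catalan n := by
  rw [← Nat.cast_inj (R := ℤ), card_treePairs_leftHeight_le_eq_sum, ← map_sum,
    sum_heightGenFun_mul_sub, map_sub, map_add, coeff_heightGenFun_of_lt (by omega),
    coeff_heightGenFun_of_lt (by omega), coeff_one, if_neg (Nat.one_le_iff_ne_zero.mp hn)]
  push_cast
  ring

theorem card_pairs_height_le (n : ℕ) (hn : 1 ≤ n) :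
    Nat.card {PQ : List ℤ × List ℤ //
        (∃ a b : ℕ, IsDyck a PQ.1 ∧ IsDyck b PQ.2 ∧ a + b = n) ∧
          pathHeight PQ.1 ≤ pathHeight PQ.2 + 1} = 2 * catalan n := by
  rw [← card_treePairs_leftHeight_le hn,
    ← card_map ⟨Prod.map treePath treePath, treePath_injective.prodMap treePath_injective⟩]
  refine Nat.subtype_card _ fun ⟨P, Q⟩ => ?_
  simp only [mem_map, mem_filter, mem_treePairs, Function.Embedding.coeFn_mk, Prod.exists,
    Prod.map_apply, Prod.mk.injEq, isDyck_iff_exists_treePath]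
  constructor
  · rintro ⟨s, t, ⟨numNodes_eq, height_le⟩, rfl, rfl⟩
    refine ⟨⟨_, _, ⟨s, rfl, rfl⟩, ⟨t, rfl, rfl⟩, numNodes_eq⟩, ?_⟩
    rw [pathHeight_treePath, pathHeight_treePath]
    exact_mod_cast height_le
  · rintro ⟨⟨_, _, ⟨s, rfl, rfl⟩, ⟨t, rfl, rfl⟩, numNodes_eq⟩, height_le⟩
    rw [pathHeight_treePath, pathHeight_treePath] at height_le
    exact ⟨s, t, ⟨numNodes_eq, by exact_mod_cast height_le⟩, rfl, rfl⟩
end
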